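/- Let T ≥ 2 and τ ∈ {2,…,T}. Suppose the file F and shares M_1,…,M_T satisfy: H(F | M_S) = 0 for every S ⊆ {1,…,T} with |S| ≥ τ, and I(F; M_S) = 0 for every S ⊆ {1,…,T} with |S| ≤ τ−1 (perfect threshold secret sharing). Then for every t ∈ {1,…,T}, H(M_t) ≥ H(F). -/

import Mathlib

/-!
Let `S` be a set of `τ - 1` servers not containing `t`. Perfect secrecy of `M_S` and
reconstruction of `F` from `M_{S ∪ {t}}` give
`H(F) + H(M_S) = H(F, M_S) ≤ H(F, M_{S ∪ {t}}) = H(M_{S ∪ {t}}) ≤ H(M_t) + H(M_S)`,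
and `H(M_S)` cancels. The two inequalities are monotonicity of entropy under taking functions
(`ent_mono`) and subadditivity (`ent_pair_le`); both are proved from the formula
`H(X) = -∑ ω, p ω * log₂ P(X = X ω)` (`ent_eq`), the second one with `log z ≤ z - 1`.
-/

open scoped BigOperators
open Classical

noncomputable section

/-- Probability of an event `A` under the probability mass function `p` on a finite
sample space `Ω`. -/
def prb {Ω : Type} [Fintype Ω] (p : Ω → ℝ) (A : Set Ω) : ℝ :=
  ∑ ω, if ω ∈ A then p ω else 0

/-- Shannon entropy (in bits, base-2 logarithm) of a random variable `X` defined on a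
finite sample space with probability mass function `p`, with the convention
`0 * log 0 = 0`. -/
def ent {Ω V : Type} [Fintype Ω] [Fintype V] (p : Ω → ℝ) (X : Ω → V) : ℝ :=
  -∑ v, prb p {ω | X ω = v} * Real.logb 2 (prb p {ω | X ω = v})

/-- Conditional Shannon entropy `H(X | Y) = H(X, Y) - H(Y)`. -/
def condEnt {Ω V W : Type} [Fintype Ω] [Fintype V] [Fintype W]
    (p : Ω → ℝ) (X : Ω → V) (Y : Ω → W) : ℝ :=
  ent p (fun ω => (X ω, Y ω)) - ent p Y

/-- Mutual information `I(X ; Y) = H(X) + H(Y) - H(X, Y)`. -/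
def mutInf {Ω V W : Type} [Fintype Ω] [Fintype V] [Fintype W]
    (p : Ω → ℝ) (X : Ω → V) (Y : Ω → W) : ℝ :=
  ent p X + ent p Y - ent p (fun ω => (X ω, Y ω))

/-- The tuple of shares `M_S = (M_t)_{t ∈ S}` viewed as a single random variable. -/
def shares {Ω : Type} {T : ℕ} {χ : Fin T → Type} (M : ∀ t, Ω → χ t)
    (S : Finset (Fin T)) : Ω → (∀ t : S, χ t.1) :=
  fun ω t => M t.1 ω

lemma sum_prb_mul {Ω V : Type} [Fintype Ω] [Fintype V] (p : Ω → ℝ) (X : Ω → V) (f : V → ℝ) :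
    ∑ v, prb p {ω | X ω = v} * f v = ∑ ω, p ω * f (X ω) := by
  simp only [prb, Finset.sum_mul, Set.mem_ofPred_eq]
  rw [Finset.sum_comm]
  refine Finset.sum_congr rfl fun ω _ => ?_
  rw [Finset.sum_eq_single (X ω)]
  · simp
  · intro v _ hv
    simp [Ne.symm hv]
  · simp

/-- Entropy as the expectation of the surprisal. -/
lemma ent_eq {Ω V : Type} [Fintype Ω] [Fintype V] (p : Ω → ℝ) (X : Ω → V) :
    ent p X = -∑ ω, p ω * Real.logb 2 (prb p {ω' | X ω' = X ω}) := by
  rw [ent, sum_prb_mul p X (fun v => Real.logb 2 (prb p {ω | X ω = v}))]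

lemma prb_mono {Ω : Type} [Fintype Ω] {p : Ω → ℝ} (hp0 : ∀ ω, 0 ≤ p ω) {A B : Set Ω}
    (h : A ⊆ B) : prb p A ≤ prb p B := by
  refine Finset.sum_le_sum fun ω _ => ?_
  by_cases hA : ω ∈ A
  · simp [hA, h hA]
  · simp only [hA, if_false]
    split_ifs
    exacts [hp0 ω, le_rfl]

lemma prb_nonneg {Ω : Type} [Fintype Ω] {p : Ω → ℝ} (hp0 : ∀ ω, 0 ≤ p ω) (A : Set Ω) :
    0 ≤ prb p A :=
  Finset.sum_nonneg fun ω _ => by split_ifs; exacts [hp0 ω, le_rfl]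

lemma le_prb {Ω : Type} [Fintype Ω] {p : Ω → ℝ} (hp0 : ∀ ω, 0 ≤ p ω) {A : Set Ω} {ω : Ω}
    (h : ω ∈ A) : p ω ≤ prb p A := by
  have := Finset.single_le_sum (f := fun ω => if ω ∈ A then p ω else 0)
    (fun ω _ => by split_ifs; exacts [hp0 ω, le_rfl]) (Finset.mem_univ ω)
  simpa [h, prb] using this

/-- `H(X) ≤ H(Y)` when `X` is a function of `Y`; the functional dependence is expressed by saying
that `Y` separates any two sample points that `X` separates. -/
lemma ent_mono {Ω V W : Type} [Fintype Ω] [Fintype V] [Fintype W] {p : Ω → ℝ}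
    (hp0 : ∀ ω, 0 ≤ p ω) (X : Ω → V) (Y : Ω → W)
    (h : ∀ ω ω', Y ω' = Y ω → X ω' = X ω) : ent p X ≤ ent p Y := by
  rw [ent_eq, ent_eq, neg_le_neg_iff]
  refine Finset.sum_le_sum fun ω _ => ?_
  rcases (hp0 ω).eq_or_lt with h0 | h0
  · simp [← h0]
  · have hY : 0 < prb p {ω' | Y ω' = Y ω} := h0.trans_le (le_prb hp0 (by simp))
    exact mul_le_mul_of_nonneg_left
      (Real.logb_le_logb_of_le (by norm_num) hY (prb_mono hp0 fun ω' hω' => h ω ω' hω')) h0.le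

/-- Subadditivity of entropy, `H(X, Y) ≤ H(X) + H(Y)`. -/
lemma ent_pair_le {Ω V W : Type} [Fintype Ω] [Fintype V] [Fintype W] {p : Ω → ℝ}
    (hp0 : ∀ ω, 0 ≤ p ω) (hp1 : ∑ ω, p ω = 1) (X : Ω → V) (Y : Ω → W) :
    ent p (fun ω => (X ω, Y ω)) ≤ ent p X + ent p Y := by
  have hmass : ∀ {U : Type} [Fintype U] (Z : Ω → U), ∑ u, prb p {ω | Z ω = u} = 1 := by
    intro U _ Z
    have := sum_prb_mul p Z (fun _ => 1)
    simpa [hp1] using this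
  -- The likelihood ratio `P(X = v) P(Y = w) / P(X = v, Y = w)`, equal to `0` where the joint
  -- probability vanishes; its expectation is therefore at most `1`, possibly smaller.
  let r : V × W → ℝ := fun u =>
    prb p {ω | X ω = u.1} * prb p {ω | Y ω = u.2} / prb p {ω | (X ω, Y ω) = u}
  have hr : ∑ ω, p ω * r (X ω, Y ω) ≤ 1 := by
    rw [← sum_prb_mul p (fun ω => (X ω, Y ω)) r]
    calc ∑ u, prb p {ω | (X ω, Y ω) = u} * r u
        ≤ ∑ u : V × W, prb p {ω | X ω = u.1} * prb p {ω | Y ω = u.2} := by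
          refine Finset.sum_le_sum fun u _ => ?_
          by_cases h0 : prb p {ω | (X ω, Y ω) = u} = 0
          · rw [h0, zero_mul]
            exact mul_nonneg (prb_nonneg hp0 _) (prb_nonneg hp0 _)
          · exact (mul_div_cancel₀ _ h0).le
      _ = 1 := by
          rw [Fintype.sum_prod_type]
          simp only [← Finset.mul_sum]
          rw [hmass Y]
          simpa using hmass X
  have hlog2 : 0 < Real.log 2 := Real.log_pos (by norm_num)
  have key : ∀ ω, p ω * (Real.logb 2 (prb p {ω' | X ω' = X ω})
      + Real.logb 2 (prb p {ω' | Y ω' = Y ω})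
      - Real.logb 2 (prb p {ω' | (X ω', Y ω') = (X ω, Y ω)}))
      ≤ (p ω * r (X ω, Y ω) - p ω) / Real.log 2 := by
    intro ω
    rcases (hp0 ω).eq_or_lt with h0 | h0
    · simp [← h0]
    · have hX : 0 < prb p {ω' | X ω' = X ω} := h0.trans_le (le_prb hp0 (by simp))
      have hY : 0 < prb p {ω' | Y ω' = Y ω} := h0.trans_le (le_prb hp0 (by simp))
      have hZ : 0 < prb p {ω' | (X ω', Y ω') = (X ω, Y ω)} := h0.trans_le (le_prb hp0 (by simp))
      rw [← Real.logb_mul hX.ne' hY.ne', ← Real.logb_div (mul_pos hX hY).ne' hZ.ne', Real.logb,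
        ← mul_div_assoc]
      have hlog := Real.log_le_sub_one_of_pos (div_pos (mul_pos hX hY) hZ)
      have := mul_le_mul_of_nonneg_left hlog h0.le
      rw [mul_sub, mul_one] at this
      exact div_le_div_of_nonneg_right this hlog2.le
  have hsum := Finset.sum_le_sum fun ω (_ : ω ∈ Finset.univ) => key ω
  rw [← Finset.sum_div, Finset.sum_sub_distrib, hp1] at hsum
  have hneg : (∑ ω, p ω * r (X ω, Y ω) - 1) / Real.log 2 ≤ 0 :=
    div_nonpos_of_nonpos_of_nonneg (by linarith) hlog2.le
  simp only [mul_sub, mul_add, Finset.sum_sub_distrib, Finset.sum_add_distrib] at hsum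
  rw [ent_eq, ent_eq, ent_eq]
  linarith

/-- For a perfect threshold secret sharing scheme (any `τ` shares
reconstruct `F`, any at most `τ - 1` shares are independent of `F`), every individual
share satisfies `H(M_t) ≥ H(F)`. -/
theorem perfect_secret_sharing_share_size
    {Ω : Type} [Fintype Ω] (p : Ω → ℝ)
    (hp0 : ∀ ω, 0 ≤ p ω) (hp1 : ∑ ω, p ω = 1)
    {T : ℕ} (hT : 2 ≤ T) {τ : ℕ} (hτ2 : 2 ≤ τ) (hτT : τ ≤ T)
    {𝔽 : Type} [Fintype 𝔽] (F : Ω → 𝔽) (hF : 0 < ent p F)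
    {χ : Fin T → Type} [∀ t, Fintype (χ t)] (M : ∀ t, Ω → χ t)
    (hrec : ∀ S : Finset (Fin T), τ ≤ S.card → condEnt p F (shares M S) = 0)
    (hperf : ∀ S : Finset (Fin T), S.card ≤ τ - 1 → mutInf p F (shares M S) = 0) :
    ∀ t : Fin T, ent p (M t) ≥ ent p F := by
  intro t
  obtain ⟨S, hSsub, hScard⟩ := Finset.exists_subset_card_eq
    (s := Finset.univ.erase t) (n := τ - 1) (by
      rw [Finset.card_erase_of_mem (Finset.mem_univ t), Finset.card_univ, Fintype.card_fin]
      omega)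
  have htS : t ∉ S := fun h => by simpa using hSsub h
  have hsec := hperf S hScard.le
  have hdec := hrec (insert t S) (by rw [Finset.card_insert_of_notMem htS]; omega)
  unfold mutInf at hsec
  unfold condEnt at hdec
  have h1 : ent p (fun ω => (F ω, shares M S ω))
      ≤ ent p (fun ω => (F ω, shares M (insert t S) ω)) := by
    refine ent_mono hp0 _ _ fun ω ω' h => ?_
    obtain ⟨hF', hM⟩ := Prod.mk.inj h
    refine Prod.ext hF' (funext fun s => ?_)
    exact congrFun hM ⟨s.1, Finset.mem_insert_of_mem s.2⟩
  have h2 : ent p (shares M (insert t S)) ≤ ent p (fun ω => (M t ω, shares M S ω)) := by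
    refine ent_mono hp0 _ _ fun ω ω' h => ?_
    obtain ⟨ht, hM⟩ := Prod.mk.inj h
    funext ⟨s, hs⟩
    rcases Finset.mem_insert.mp hs with rfl | hs'
    · exact ht
    · exact congrFun hM ⟨s, hs'⟩
  have h3 := ent_pair_le hp0 hp1 (M t) (shares M S)
  linarith

end
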